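/- Let R = {R_1,…,R_N} be an area-regular partition of S^d. Then the average of ‖(1/N)·Σ_{i=1}^N G_{x_i}‖_w² over points x_i distributed independently and uniformly in the regions R_i equals Σ_{i=1}^N ∫_{R_i×R_i} (g_w(1) − g_w((x,y))) dμ_d(x) dμ_d(y); that is, (1/(μ_d(R_1)⋯μ_d(R_N)))·∫_{R_1×⋯×R_N} ‖(1/N)·Σ_{i=1}^N G_{x_i}‖_w² dμ_d(x_1)⋯dμ_d(x_N) = Σ_{i=1}^N ∫_{R_i×R_i} (g_w(1) − g_w((x,y))) dμ_d(x) dμ_d(y). -/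

import Mathlib

open MeasureTheory Finset
open scoped RealInnerProductSpace

noncomputable section
attribute [local instance] Classical.propDecidable

/-- Euclidean space `ℝ^{d+1}`. -/
abbrev Euc (d : ℕ) := EuclideanSpace ℝ (Fin (d + 1))

/-- The unit sphere `S^d ⊆ ℝ^{d+1}`. -/
abbrev Sph (d : ℕ) := Metric.sphere (0 : Euc d) 1

/-- Real-valued functions on the sphere. -/
abbrev SphFun (d : ℕ) := Sph d → ℝ

/-- The normalized surface measure `μ_d` on `S^d`. -/
noncomputable def muSph (d : ℕ) : Measure (Sph d) :=
  ((volume : Measure (Euc d)).toSphere Set.univ)⁻¹ • (volume : Measure (Euc d)).toSphere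

/-- Gegenbauer polynomials `C_k^α`, normalized so that `C_k^α(1) = binom(2α+k-1, k)`,
defined by the standard three-term recurrence. -/
noncomputable def gegenbauer (α : ℝ) : ℕ → Polynomial ℝ
  | 0 => 1
  | 1 => Polynomial.C (2 * α) * Polynomial.X
  | n + 2 =>
      Polynomial.C (2 * ((n : ℝ) + 1 + α) / ((n : ℝ) + 2)) *
          (Polynomial.X * gegenbauer α (n + 1)) -
        Polynomial.C (((n : ℝ) + 2 * α) / ((n : ℝ) + 2)) * gegenbauer α n

/-- `dim H_k = ((2k+d-1)/(k+d-1))·binom(d+k-1, k)`. -/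
noncomputable def dimHarm (d k : ℕ) : ℝ :=
  ((2 * (k : ℝ) + d - 1) / ((k : ℝ) + d - 1)) * (Nat.choose (d + k - 1) k : ℝ)

/-- The kernel polynomial `g_w(t) = Σ_{k=1}^n dim H_k / (w_k G_k^α(1)) · G_k^α(t)`,
with `α = (d-1)/2` and `w_k = k(k+d-1)`. -/
noncomputable def gw (d n : ℕ) : Polynomial ℝ :=
  ∑ k ∈ Finset.Icc 1 n,
    Polynomial.C (dimHarm d k /
        (((k : ℝ) * ((k : ℝ) + d - 1)) * (gegenbauer (((d : ℝ) - 1) / 2) k).eval 1)) *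
      gegenbauer (((d : ℝ) - 1) / 2) k

/-- The Laplace operator on polynomials in `d+1` variables. -/
noncomputable def polyLaplacian (d : ℕ) (p : MvPolynomial (Fin (d + 1)) ℝ) :
    MvPolynomial (Fin (d + 1)) ℝ :=
  ∑ i : Fin (d + 1), MvPolynomial.pderiv i (MvPolynomial.pderiv i p)

/-- The space `H_k` of spherical harmonics of degree `k` on `S^d`: restrictions to the
sphere of harmonic homogeneous polynomials of degree `k`. -/
def sphHarmonic (d k : ℕ) : Set (SphFun d) :=
  {f | ∃ p : MvPolynomial (Fin (d + 1)) ℝ, p.IsHomogeneous k ∧ polyLaplacian d p = 0 ∧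
        ∀ x : Sph d, f x = MvPolynomial.eval (fun i => (x : Euc d) i) p}

/-- The space `P_n`: restrictions to `S^d` of polynomials of total degree at most `n`
having zero mean over the sphere. -/
def PolySph (d n : ℕ) : Set (SphFun d) :=
  {f | ∃ p : MvPolynomial (Fin (d + 1)) ℝ, p.totalDegree ≤ n ∧
        (∀ x : Sph d, f x = MvPolynomial.eval (fun i => (x : Euc d) i) p) ∧
        ∫ x, f x ∂muSph d = 0}

/-- The `H_k`-component of `P ∈ P_n` in the decomposition `P_n = ⊕_{k=1}^n H_k`
(the decomposition is unique; an arbitrary one is chosen if it exists). -/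
noncomputable def harmComponent (d n : ℕ) (P : SphFun d) (k : ℕ) : SphFun d :=
  if h : ∃ c : ℕ → SphFun d, (∀ j, c j ∈ sphHarmonic d j) ∧ P = ∑ j ∈ Finset.Icc 1 n, c j
  then h.choose k else 0

/-- The inner product `⟨P,Q⟩_w = Σ_{k=1}^n w_k ∫ P_k Q_k dμ_d` with `w_k = k(k+d-1)`. -/
noncomputable def innerW (d n : ℕ) (P Q : SphFun d) : ℝ :=
  ∑ k ∈ Finset.Icc 1 n, ((k : ℝ) * ((k : ℝ) + d - 1)) *
    ∫ x, harmComponent d n P k x * harmComponent d n Q k x ∂muSph d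

/-- The norm `‖P‖_w = ⟨P,P⟩_w^{1/2}`. -/
noncomputable def normW (d n : ℕ) (P : SphFun d) : ℝ :=
  Real.sqrt (innerW d n P P)

/-- The function `G_x(y) = g_w((x,y))` on the sphere, for `x ∈ ℝ^{d+1}`. -/
noncomputable def GxFun (d n : ℕ) (x : Euc d) : SphFun d :=
  fun y => (gw d n).eval ⟪x, (y : Euc d)⟫

/-- The extension of a function on the sphere to `ℝ^{d+1} \ {0}` by `x ↦ f(x/‖x‖)`
(with value `0` at the origin). -/
noncomputable def extendSph (d : ℕ) (f : SphFun d) : Euc d → ℝ :=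
  fun x =>
    if hx : x = 0 then 0
    else f ⟨‖x‖⁻¹ • x, by
      rw [mem_sphere_zero_iff_norm, norm_smul, norm_inv, norm_norm,
        inv_mul_cancel₀ (norm_ne_zero_iff.mpr hx)]⟩

/-- The spherical gradient `∇f(x) = (∂/∂x) f(x/‖x‖)`. -/
noncomputable def sphGrad (d : ℕ) (f : SphFun d) (x : Euc d) : Euc d :=
  gradient (extendSph d f) x

/-- The spherical Hessian quadratic form `∇²f(x)·y·y`. -/
noncomputable def sphHessApply (d : ℕ) (f : SphFun d) (x y : Euc d) : ℝ :=
  iteratedFDeriv ℝ 2 (extendSph d f) x ![y, y]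

/-- `‖∇²f(x₀)‖ = max { |∇²f(x₀)·y·y| : ‖y‖ = 1, (y,x₀) = 0 }`. -/
noncomputable def sphHessNorm (d : ℕ) (f : SphFun d) (x₀ : Sph d) : ℝ :=
  sSup {r : ℝ | ∃ y : Euc d, ‖y‖ = 1 ∧ ⟪y, (x₀ : Euc d)⟫ = 0 ∧
    r = |sphHessApply d f (x₀ : Euc d) y|}

/-- `x_1, …, x_N ∈ S^d` form a spherical `n`-design. -/
def IsSphericalDesign (d n N : ℕ) (x : Fin N → Sph d) : Prop :=
  ∀ p : MvPolynomial (Fin (d + 1)) ℝ, p.totalDegree ≤ n →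
    ∫ y, MvPolynomial.eval (fun j => (y : Euc d) j) p ∂muSph d =
      (N : ℝ)⁻¹ * ∑ i, MvPolynomial.eval (fun j => ((x i : Euc d)) j) p

/-- An area-regular partition `R_1, …, R_N` of `S^d`: closed sets with pairwise disjoint
interiors, covering the sphere, each of normalized measure `1/N`. -/
def IsAreaRegularPartition (d N : ℕ) (R : Fin N → Set (Sph d)) : Prop :=
  (∀ i, IsClosed (R i)) ∧ (⋃ i, R i) = Set.univ ∧
    (∀ i j, i ≠ j → interior (R i) ∩ interior (R j) = ∅) ∧
    ∀ i, muSph d (R i) = 1 / N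

/-- The Marcinkiewicz–Zygmund property of degree `m` for points `x_1, …, x_N ∈ S^d`. -/
def MZProperty (d m N : ℕ) (x : Fin N → Sph d) : Prop :=
  ∀ p : MvPolynomial (Fin (d + 1)) ℝ, p.totalDegree ≤ m →
    (1 / 2) * (∫ y, |MvPolynomial.eval (fun j => (y : Euc d) j) p| ∂muSph d) ≤
        (N : ℝ)⁻¹ * ∑ i, |MvPolynomial.eval (fun j => ((x i : Euc d)) j) p| ∧
      (N : ℝ)⁻¹ * ∑ i, |MvPolynomial.eval (fun j => ((x i : Euc d)) j) p| ≤
        (3 / 2) * ∫ y, |MvPolynomial.eval (fun j => (y : Euc d) j) p| ∂muSph d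

/-- The point `x_i(P)`: move `x` along the great circle in the direction of the spherical
gradient `∇P(x)` through angle `‖∇P(x)‖`. -/
noncomputable def movePoint (d : ℕ) (P : SphFun d) (x : Sph d) : Euc d :=
  if _h : sphGrad d P (x : Euc d) = 0 then (x : Euc d)
  else Real.cos ‖sphGrad d P (x : Euc d)‖ • (x : Euc d) +
    Real.sin ‖sphGrad d P (x : Euc d)‖ • (‖sphGrad d P (x : Euc d)‖⁻¹ • sphGrad d P (x : Euc d))

/-- The map `L(P) = (1/N) Σ_i G_{x_i(P)}`. -/
noncomputable def Lmap (d n N : ℕ) (x : Fin N → Sph d) (P : SphFun d) : SphFun d :=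
  (N : ℝ)⁻¹ • ∑ i, GxFun d n (movePoint d P (x i))

end

/-!
The harmonic components of `G_x` are multiples of the zonal harmonics `G_k^α((x, ·))`. Integrating
by parts against the Gaussian `exp (-‖x‖²)` computes the spherical mean of `X i * p` from that of
`∂ᵢ p`; this makes spherical harmonics of different degrees orthogonal and the zonal harmonics
reproducing, so `‖∑ aᵢ G_{xᵢ}‖_w² = ∑ aᵢ aⱼ g_w((xᵢ, xⱼ))`.

For independent `xᵢ` uniform in `Rᵢ`, the `(i, j)` term averages to the double integral of `g_w`
against the uniform measures of `Rᵢ` and `Rⱼ` when `i ≠ j`, but to `g_w(1)` when `i = j`. The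
uniform measures average to `μ_d`, against which `g_w((x, ·))` has mean zero, so the double
integrals over all pairs sum to zero and only the defects of the diagonal terms remain.
-/

section GaussianIntegrals

variable {E : Type*} [NormedAddCommGroup E] [NormedSpace ℝ E] [FiniteDimensional ℝ E]
  [MeasurableSpace E] [BorelSpace E]

theorem integrable_norm_pow_mul_exp_neg_norm_sq [Nontrivial E] (μ : Measure E)
    [μ.IsAddHaarMeasure] (m : ℕ) :
    Integrable (fun x : E => ‖x‖ ^ m * Real.exp (-‖x‖ ^ 2)) μ := by
  refine (integrable_fun_norm_addHaar μ (f := fun r : ℝ => r ^ m * Real.exp (-r ^ 2))).2 ?_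
  have hpow : -1 < ((Module.finrank ℝ E - 1 + m : ℕ) : ℝ) :=
    neg_one_lt_zero.trans_le (Nat.cast_nonneg _)
  refine (integrableOn_rpow_mul_exp_neg_mul_sq one_pos hpow).congr_fun (fun r _ => ?_)
    measurableSet_Ioi
  simp only [Real.rpow_natCast, smul_eq_mul, pow_add, mul_assoc, neg_mul, one_mul]

theorem integral_pow_mul_exp_neg_sq_volumeIoiPow (n m : ℕ) :
    ∫ r : Set.Ioi (0 : ℝ), (r : ℝ) ^ m * Real.exp (-(r : ℝ) ^ 2) ∂Measure.volumeIoiPow n =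
      Real.Gamma (((n : ℝ) + m + 1) / 2) / 2 := by
  have hpow : -1 < (n : ℝ) + m := neg_one_lt_zero.trans_le (by positivity)
  rw [div_eq_inv_mul, ← one_div, ← integral_rpow_mul_exp_neg_rpow two_pos hpow,
    Measure.volumeIoiPow, integral_withDensity_eq_integral_toReal_smul
    (by fun_prop) (.of_forall fun _ => ENNReal.ofReal_lt_top),
    ← integral_subtype_comap measurableSet_Ioi]
  refine integral_congr_ae (.of_forall fun r => ?_)
  have hr : 0 < (r : ℝ) := r.2
  simp only [smul_eq_mul]
  rw [ENNReal.toReal_ofReal (by positivity), ← Nat.cast_add, Real.rpow_natCast, Real.rpow_two,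
    pow_add, mul_assoc]

theorem integral_mul_exp_neg_norm_sq_of_homogeneous (μ : Measure E) [μ.IsAddHaarMeasure]
    [Nontrivial E] {f : E → ℝ} {m : ℕ} (hf : ∀ r : ℝ, 0 < r → ∀ x, f (r • x) = r ^ m * f x) :
    ∫ x, f x * Real.exp (-‖x‖ ^ 2) ∂μ =
      Real.Gamma (((Module.finrank ℝ E : ℝ) + m) / 2) / 2 *
        ∫ x : Metric.sphere (0 : E) 1, f x ∂μ.toSphere := by
  have polar := μ.measurePreserving_homeomorphUnitSphereProd.integral_comp
    (Homeomorph.measurableEmbedding _) fun z : Metric.sphere (0 : E) 1 × Set.Ioi (0 : ℝ) =>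
      f z.1 * ((z.2 : ℝ) ^ m * Real.exp (-(z.2 : ℝ) ^ 2))
  have hdim : ((Module.finrank ℝ E - 1 : ℕ) : ℝ) + m + 1 = Module.finrank ℝ E + m := by
    rw [Nat.cast_pred Module.finrank_pos]
    ring
  rw [integral_prod_mul (fun x : Metric.sphere (0 : E) 1 => f x)
    (fun r : Set.Ioi (0 : ℝ) => (r : ℝ) ^ m * Real.exp (-(r : ℝ) ^ 2)),
    integral_pow_mul_exp_neg_sq_volumeIoiPow, hdim] at polar
  have punctured := integral_subtype_comap (μ := μ) (measurableSet_singleton (0 : E)).compl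
    fun x => f x * Real.exp (-‖x‖ ^ 2)
  rw [restrict_compl_singleton] at punctured
  rw [mul_comm, ← polar, ← punctured]
  refine integral_congr_ae (.of_forall fun x => ?_)
  have hx : 0 < ‖(x : E)‖ := norm_pos_iff.2 x.2
  have hfx : f (‖(x : E)‖⁻¹ • x) * ‖(x : E)‖ ^ m = f x := by
    rw [hf _ (inv_pos.2 hx), mul_right_comm, ← mul_pow, inv_mul_cancel₀ hx.ne', one_pow, one_mul]
  simp only [homeomorphUnitSphereProd_apply_fst_coe, homeomorphUnitSphereProd_apply_snd_coe]
  rw [← mul_assoc, hfx]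

end GaussianIntegrals

section PolynomialGaussianIntegrals

open MvPolynomial

theorem eval_smul_of_isHomogeneous {σ R : Type*} [CommSemiring R] {m : ℕ} {p : MvPolynomial σ R}
    (hp : p.IsHomogeneous m) (r : R) (x : σ → R) :
    eval (r • x) p = r ^ m * eval x p := by
  rw [eval_eq, eval_eq, Finset.mul_sum]
  refine Finset.sum_congr rfl fun s hs => ?_
  rw [hp.degree_eq_sum_deg_support hs, ← Finset.prod_pow_eq_pow_sum]
  simp only [Pi.smul_apply, smul_eq_mul, mul_pow, Finset.prod_mul_distrib]
  exact mul_left_comm _ _ _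

theorem continuous_eval_ofLp {ι : Type*} (p : MvPolynomial ι ℝ) :
    Continuous fun x : EuclideanSpace ℝ ι => eval x.ofLp p :=
  p.continuous_eval.comp (PiLp.continuous_ofLp 2 _)

theorem hasLineDerivAt_eval_pderiv {ι : Type*} [DecidableEq ι] (p : MvPolynomial ι ℝ) (i : ι)
    (x : EuclideanSpace ℝ ι) :
    HasLineDerivAt ℝ (fun x : EuclideanSpace ℝ ι => eval x.ofLp p) (eval x.ofLp (pderiv i p)) x
      (EuclideanSpace.single i 1) := by
  unfold HasLineDerivAt
  induction p using MvPolynomial.induction_on with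
  | C a => simpa using hasDerivAt_const (0 : ℝ) a
  | add p q hp hq => simpa using hp.fun_add hq
  | mul_X p j hp =>
    have hcoord : HasDerivAt (fun t : ℝ => (x + t • EuclideanSpace.single i (1 : ℝ)).ofLp j)
        (eval x.ofLp (pderiv i (X j))) 0 := by
      have heval : eval x.ofLp (pderiv i (X j)) = Pi.single (M := fun _ => ℝ) i 1 j := by
        simp [pderiv_X, Pi.single_apply, apply_ite (eval x.ofLp)]
      exact (((hasDerivAt_id (0 : ℝ)).mul_const _).const_add (x j)).congr_deriv
        ((one_mul _).trans heval.symm)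
    simpa only [pderiv_mul, map_add, map_mul, eval_X, zero_smul, add_zero, add_comm,
      mul_comm] using hp.fun_mul hcoord

theorem hasLineDerivAt_exp_neg_norm_sq {F : Type*} [NormedAddCommGroup F] [InnerProductSpace ℝ F]
    (x v : F) :
    HasLineDerivAt ℝ (fun x : F => Real.exp (-‖x‖ ^ 2)) (-2 * ⟪x, v⟫ * Real.exp (-‖x‖ ^ 2))
      x v := by
  have h := (hasStrictFDerivAt_norm_sq x).hasFDerivAt.neg.exp.hasLineDerivAt v
  refine h.congr_deriv ?_
  simp only [Pi.neg_apply, smul_neg, neg_apply, smul_apply, coe_innerSL_apply, nsmul_eq_mul,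
    Nat.cast_ofNat, smul_eq_mul, neg_mul, neg_inj]
  ring

variable {ι : Type*} [Fintype ι]

theorem integrable_eval_mul_norm_pow_mul_exp_neg_norm_sq [Nonempty ι] (p : MvPolynomial ι ℝ)
    (m : ℕ) :
    Integrable fun x : EuclideanSpace ℝ ι =>
      eval x.ofLp p * (‖x‖ ^ m * Real.exp (-‖x‖ ^ 2)) := by
  induction p using MvPolynomial.induction_on generalizing m with
  | C a =>
    simpa only [eval_C] using (integrable_norm_pow_mul_exp_neg_norm_sq volume m).const_mul a
  | add p q hp hq => simpa only [map_add, add_mul] using (hp m).fun_add (hq m)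
  | mul_X p i hp =>
    have hcont := continuous_eval_ofLp (p * X i)
    refine (hp (m + 1)).mono (by fun_prop) (.of_forall fun x => ?_)
    have hcoord : ‖x i‖ ≤ ‖x‖ := PiLp.norm_apply_le x i
    simp only [map_mul, eval_X, norm_mul, norm_pow, norm_norm]
    calc ‖eval x.ofLp p‖ * ‖x i‖ * (‖x‖ ^ m * ‖Real.exp (-‖x‖ ^ 2)‖)
        ≤ ‖eval x.ofLp p‖ * ‖x‖ * (‖x‖ ^ m * ‖Real.exp (-‖x‖ ^ 2)‖) := by gcongr
      _ = ‖eval x.ofLp p‖ * (‖x‖ ^ (m + 1) * ‖Real.exp (-‖x‖ ^ 2)‖) := by ring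

theorem integrable_eval_mul_exp_neg_norm_sq [Nonempty ι] (p : MvPolynomial ι ℝ) :
    Integrable fun x : EuclideanSpace ℝ ι => eval x.ofLp p * Real.exp (-‖x‖ ^ 2) := by
  simpa using integrable_eval_mul_norm_pow_mul_exp_neg_norm_sq p 0

theorem two_mul_integral_X_mul_exp_neg_norm_sq (p : MvPolynomial ι ℝ) (i : ι) :
    2 * ∫ x : EuclideanSpace ℝ ι, eval x.ofLp (X i * p) * Real.exp (-‖x‖ ^ 2) =
      ∫ x : EuclideanSpace ℝ ι, eval x.ofLp (pderiv i p) * Real.exp (-‖x‖ ^ 2) := by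
  classical
  have : Nonempty ι := ⟨i⟩
  have hmul (x : EuclideanSpace ℝ ι) :
      eval x.ofLp p * (-2 * ⟪x, EuclideanSpace.single i 1⟫ * Real.exp (-‖x‖ ^ 2)) =
        -2 * (eval x.ofLp (X i * p) * Real.exp (-‖x‖ ^ 2)) := by
    simp only [EuclideanSpace.inner_single_right, map_mul, eval_X, conj_trivial]
    ring
  have byParts := integral_bilinear_hasLineDerivAt_right_eq_neg_left_of_integrable
    (μ := volume) (B := ContinuousLinearMap.mul ℝ ℝ)
    (by simpa using integrable_eval_mul_exp_neg_norm_sq (pderiv i p))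
    (by simpa only [ContinuousLinearMap.mul_apply', hmul] using
      (integrable_eval_mul_exp_neg_norm_sq (X i * p)).const_mul (-2))
    (by simpa using integrable_eval_mul_exp_neg_norm_sq p)
    (fun x _ => hasLineDerivAt_eval_pderiv p i x)
    (fun x _ => hasLineDerivAt_exp_neg_norm_sq x (EuclideanSpace.single i 1))
  simp only [ContinuousLinearMap.mul_apply', hmul, integral_const_mul] at byParts
  linarith

end PolynomialGaussianIntegrals

section LinearForms

open MvPolynomial

variable {σ R : Type*} [CommSemiring R]

theorem pderiv_comm (i j : σ) (p : MvPolynomial σ R) :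
    pderiv i (pderiv j p) = pderiv j (pderiv i p) := by
  ext m
  simp only [coeff_pderiv, add_right_comm m, Finsupp.add_apply]
  rcases eq_or_ne i j with rfl | hij
  · rfl
  · simp only [Finsupp.single_eq_of_ne hij, Finsupp.single_eq_of_ne hij.symm, add_zero]
    rw [mul_right_comm]

variable [Fintype σ]

/-- The linear form `y ↦ ∑ i, x i * y i`, as a polynomial. -/
noncomputable def linearForm (x : σ → R) : MvPolynomial σ R :=
  ∑ i, C (x i) * X i

/-- The squared Euclidean norm `∑ i, X i ^ 2`, as a polynomial. -/
noncomputable def normSqPoly (σ R : Type*) [CommSemiring R] [Fintype σ] : MvPolynomial σ R :=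
  ∑ i, X i ^ 2

/-- The derivative in the direction `x`, as a derivation of the polynomial ring. -/
noncomputable def dirDeriv (x : σ → R) : Derivation R (MvPolynomial σ R) (MvPolynomial σ R) :=
  ∑ i, x i • pderiv i

theorem dirDeriv_apply (x : σ → R) (p : MvPolynomial σ R) :
    dirDeriv x p = ∑ i, C (x i) * pderiv i p := by
  have := congrFun (map_sum Derivation.coeFnAddMonoidHom (fun i => x i • pderiv i) univ) p
  simpa only [dirDeriv, Finset.sum_apply, Derivation.coeFnAddMonoidHom_apply,
    Derivation.smul_apply, smul_eq_C_mul] using this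

theorem isHomogeneous_linearForm (x : σ → R) : (linearForm x).IsHomogeneous 1 :=
  IsHomogeneous.sum _ _ _ fun _ _ => isHomogeneous_C_mul_X _ _

theorem isHomogeneous_normSqPoly : (normSqPoly σ R).IsHomogeneous 2 :=
  IsHomogeneous.sum _ _ _ fun i _ => isHomogeneous_X_pow i 2

theorem eval_linearForm (x y : σ → R) : eval y (linearForm x) = x ⬝ᵥ y := by
  simp [linearForm, dotProduct]

theorem eval_normSqPoly (y : σ → R) : eval y (normSqPoly σ R) = y ⬝ᵥ y := by
  simp [normSqPoly, dotProduct, sq]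

theorem pderiv_linearForm (x : σ → R) (i : σ) : pderiv i (linearForm x) = C (x i) := by
  classical
  simp [linearForm, pderiv_X, Pi.single_apply]

theorem pderiv_normSqPoly (i : σ) : pderiv i (normSqPoly σ R) = 2 * X i := by
  classical
  simp [normSqPoly, pderiv_X, Pi.single_apply]

theorem dirDeriv_linearForm (x : σ → R) : dirDeriv x (linearForm x) = C (x ⬝ᵥ x) := by
  simp only [dirDeriv_apply, pderiv_linearForm, dotProduct, map_sum, map_mul]

theorem dirDeriv_normSqPoly (x : σ → R) : dirDeriv x (normSqPoly σ R) = 2 * linearForm x := by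
  simp only [dirDeriv_apply, pderiv_normSqPoly, linearForm, mul_sum, mul_left_comm]

theorem isHomogeneous_dirDeriv (x : σ → R) {p : MvPolynomial σ R} {m : ℕ}
    (hp : p.IsHomogeneous m) : (dirDeriv x p).IsHomogeneous (m - 1) := by
  rw [dirDeriv_apply]
  exact IsHomogeneous.sum _ _ _ fun i _ => hp.pderiv.C_mul _

theorem eval_dirDeriv_self (x : σ → R) {p : MvPolynomial σ R} {m : ℕ}
    (hp : p.IsHomogeneous m) : eval x (dirDeriv x p) = m * eval x p := by
  have euler := congrArg (eval x) hp.sum_X_mul_pderiv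
  simpa only [dirDeriv_apply, map_sum, map_mul, eval_C, eval_X, nsmul_eq_mul,
    map_natCast] using euler

end LinearForms

section ZonalPolynomials

open MvPolynomial

variable {σ : Type*} [Fintype σ] (α : ℝ) (x : σ → ℝ)

/-- The homogenized Gegenbauer polynomial `‖y‖ ^ k * G_k^α ((x, y) / ‖y‖)`, as a polynomial in
`y`. It is harmonic for a unit vector `x` and `α = (d - 1) / 2`. -/
noncomputable def zonal : ℕ → MvPolynomial σ ℝ
  | 0 => 1
  | 1 => C (2 * α) * linearForm x
  | n + 2 => C (2 * ((n : ℝ) + 1 + α) / ((n : ℝ) + 2)) * (linearForm x * zonal (n + 1)) -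
      C (((n : ℝ) + 2 * α) / ((n : ℝ) + 2)) * (normSqPoly σ ℝ * zonal n)

theorem isHomogeneous_zonal : ∀ k, (zonal α x k).IsHomogeneous k
  | 0 => isHomogeneous_one _ _
  | 1 => (isHomogeneous_linearForm x).C_mul _
  | n + 2 => by
    have hlin := ((isHomogeneous_linearForm x).mul (isHomogeneous_zonal (n + 1))).C_mul
      (2 * ((n : ℝ) + 1 + α) / ((n : ℝ) + 2))
    have hsq := (isHomogeneous_normSqPoly.mul (isHomogeneous_zonal n)).C_mul
      (((n : ℝ) + 2 * α) / ((n : ℝ) + 2))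
    rw [add_comm 1] at hlin
    rw [add_comm 2] at hsq
    exact hlin.sub hsq

theorem eval_zonal {y : σ → ℝ} (hy : y ⬝ᵥ y = 1) :
    ∀ k, eval y (zonal α x k) = (gegenbauer α k).eval (x ⬝ᵥ y)
  | 0 => by simp [zonal, gegenbauer]
  | 1 => by simp [zonal, gegenbauer, eval_linearForm]
  | n + 2 => by
    simp [zonal, gegenbauer, eval_linearForm, eval_normSqPoly, hy, eval_zonal hy n,
      eval_zonal hy (n + 1)]

theorem zonal_succ_succ (n : ℕ) :
    ((n : MvPolynomial σ ℝ) + 2) * zonal α x (n + 2) =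
      2 * ((n : MvPolynomial σ ℝ) + 1 + C α) * (linearForm x * zonal α x (n + 1)) -
        ((n : MvPolynomial σ ℝ) + 2 * C α) * (normSqPoly σ ℝ * zonal α x n) := by
  have hcast : (n : MvPolynomial σ ℝ) + 2 = C ((n : ℝ) + 2) := by
    simp [map_ofNat C]
  have hlin : C ((n : ℝ) + 2) * C (2 * ((n : ℝ) + 1 + α) / ((n : ℝ) + 2)) =
      2 * ((n : MvPolynomial σ ℝ) + 1 + C α) := by
    rw [← map_mul, mul_div_cancel₀ _ (by positivity)]
    simp [map_ofNat C]
  have hsq : C ((n : ℝ) + 2) * C (((n : ℝ) + 2 * α) / ((n : ℝ) + 2)) =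
      (n : MvPolynomial σ ℝ) + 2 * C α := by
    rw [← map_mul, mul_div_cancel₀ _ (by positivity)]
    simp [map_ofNat C]
  rw [zonal, hcast, mul_sub, ← mul_assoc (C _), ← mul_assoc (C _), hlin, hsq]

variable {x}

theorem dirDeriv_zonal_succ_succ (hx : x ⬝ᵥ x = 1) (n : ℕ) :
    ((n : MvPolynomial σ ℝ) + 2) * dirDeriv x (zonal α x (n + 2)) =
      2 * ((n : MvPolynomial σ ℝ) + 1 + C α) *
          (zonal α x (n + 1) + linearForm x * dirDeriv x (zonal α x (n + 1))) -
        ((n : MvPolynomial σ ℝ) + 2 * C α) *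
          (2 * linearForm x * zonal α x n + normSqPoly σ ℝ * dirDeriv x (zonal α x n)) := by
  have htwo : dirDeriv x 2 = 0 := by exact_mod_cast (dirDeriv x).map_natCast 2
  have hrec := congrArg (dirDeriv x) (zonal_succ_succ α x n)
  simp only [map_sub, map_add, Derivation.leibniz, Derivation.map_natCast, htwo, smul_eq_mul,
    Derivation.map_one_eq_zero, derivation_C, dirDeriv_linearForm, dirDeriv_normSqPoly, hx,
    map_one] at hrec
  linear_combination hrec

theorem dirDeriv_zonal_succ (hx : x ⬝ᵥ x = 1) :
    ∀ n, dirDeriv x (zonal α x (n + 1)) = ((n : MvPolynomial σ ℝ) + 2 * C α) * zonal α x n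
  | 0 => by
    rw [zero_add, zonal, zonal, ← smul_eq_C_mul, Derivation.map_smul, dirDeriv_linearForm,
      hx]
    simp [smul_eq_C_mul, map_ofNat C]
  | 1 => by
    have hderiv := dirDeriv_zonal_succ_succ α hx 0
    rw [dirDeriv_zonal_succ hx 0] at hderiv
    refine mul_left_cancel₀ (two_ne_zero (α := MvPolynomial σ ℝ)) ?_
    simp only [zonal, map_mul, map_ofNat C, Nat.cast_zero, Nat.cast_one,
      Derivation.map_one_eq_zero] at hderiv ⊢
    linear_combination hderiv
  | n + 2 => by
    have hrec := zonal_succ_succ α x n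
    have hderiv := dirDeriv_zonal_succ_succ α hx (n + 1)
    rw [dirDeriv_zonal_succ hx n, dirDeriv_zonal_succ hx (n + 1)] at hderiv
    have hne : (n : MvPolynomial σ ℝ) + 3 ≠ 0 := by exact_mod_cast (n + 2).succ_ne_zero
    refine mul_left_cancel₀ hne ?_
    push_cast at hderiv ⊢
    linear_combination hderiv - (n + 1 + 2 * C α) * hrec

end ZonalPolynomials

section HarmonicPolynomials

open MvPolynomial

variable {d : ℕ}

theorem polyLaplacian_mul (p q : MvPolynomial (Fin (d + 1)) ℝ) :
    polyLaplacian d (p * q) = polyLaplacian d p * q + 2 * ∑ i, pderiv i p * pderiv i q +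
      p * polyLaplacian d q := by
  simp only [polyLaplacian, sum_mul, mul_sum, ← sum_add_distrib]
  refine sum_congr rfl fun j _ => ?_
  simp only [pderiv_mul, map_add]
  ring

theorem polyLaplacian_linearForm_mul (x : Fin (d + 1) → ℝ) (p : MvPolynomial (Fin (d + 1)) ℝ) :
    polyLaplacian d (linearForm x * p) = 2 * dirDeriv x p + linearForm x * polyLaplacian d p := by
  have hlin : polyLaplacian d (linearForm x) = 0 := by simp [polyLaplacian, pderiv_linearForm]
  simp only [polyLaplacian_mul, hlin, pderiv_linearForm, dirDeriv_apply, zero_mul, zero_add]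

theorem polyLaplacian_normSqPoly_mul {m : ℕ} {p : MvPolynomial (Fin (d + 1)) ℝ}
    (hp : p.IsHomogeneous m) :
    polyLaplacian d (normSqPoly _ ℝ * p) =
      (2 * (d + 1) + 4 * m : MvPolynomial (Fin (d + 1)) ℝ) * p +
        normSqPoly _ ℝ * polyLaplacian d p := by
  have hsq : polyLaplacian d (normSqPoly _ ℝ) = 2 * (d + 1) := by
    have hX (i : Fin (d + 1)) : pderiv i (2 * X i : MvPolynomial (Fin (d + 1)) ℝ) = 2 := by
      rw [← map_ofNat C 2, pderiv_C_mul, pderiv_X_self, mul_one]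
    simp only [polyLaplacian, pderiv_normSqPoly, hX, sum_const, card_univ, Fintype.card_fin,
      nsmul_eq_mul, Nat.cast_add_one]
    ring
  rw [polyLaplacian_mul, hsq]
  simp only [pderiv_normSqPoly, mul_assoc, ← mul_sum, hp.sum_X_mul_pderiv, nsmul_eq_mul]
  ring

/-- The Laplace operator as a linear map. -/
noncomputable def polyLaplacianLM (d : ℕ) :
    MvPolynomial (Fin (d + 1)) ℝ →ₗ[ℝ] MvPolynomial (Fin (d + 1)) ℝ where
  toFun := polyLaplacian d
  map_add' p q := by simp [polyLaplacian, sum_add_distrib]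
  map_smul' c p := by simp [polyLaplacian, smul_sum]

theorem polyLaplacianLM_apply (p : MvPolynomial (Fin (d + 1)) ℝ) :
    polyLaplacianLM d p = polyLaplacian d p :=
  rfl

/-- The harmonic homogeneous polynomials of degree `k` in `d + 1` variables. -/
noncomputable def harmonicPoly (d k : ℕ) : Submodule ℝ (MvPolynomial (Fin (d + 1)) ℝ) :=
  homogeneousSubmodule _ ℝ k ⊓ (polyLaplacianLM d).ker

theorem pderiv_mem_harmonicPoly {k : ℕ} {p : MvPolynomial (Fin (d + 1)) ℝ}
    (hp : p ∈ harmonicPoly d k) (i : Fin (d + 1)) : pderiv i p ∈ harmonicPoly d (k - 1) := by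
  refine ⟨IsHomogeneous.pderiv hp.1, ?_⟩
  have hcomm : polyLaplacian d (pderiv i p) = pderiv i (polyLaplacian d p) := by
    simp only [polyLaplacian, map_sum, pderiv_comm i]
  have hharm : polyLaplacian d p = 0 := hp.2
  exact hcomm.trans (by rw [hharm, map_zero])

theorem dirDeriv_mem_harmonicPoly {k : ℕ} {p : MvPolynomial (Fin (d + 1)) ℝ}
    (hp : p ∈ harmonicPoly d k) (x : Fin (d + 1) → ℝ) : dirDeriv x p ∈ harmonicPoly d (k - 1) := by
  simp only [dirDeriv_apply, ← smul_eq_C_mul]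
  exact Submodule.sum_smul_mem _ _ fun i _ => pderiv_mem_harmonicPoly hp i

theorem polyLaplacian_zonal {x : Fin (d + 1) → ℝ} (hx : x ⬝ᵥ x = 1) :
    ∀ k, polyLaplacian d (zonal (((d : ℝ) - 1) / 2) x k) = 0
  | 0 => by simp [zonal, polyLaplacian]
  | 1 => by simp [zonal, polyLaplacian, pderiv_linearForm]
  | n + 2 => by
    have hcoeff := congrArg (C (σ := Fin (d + 1))) <|
      show 2 * ((n : ℝ) + 1 + (d - 1) / 2) / (n + 2) * (2 * (n + 2 * ((d - 1) / 2))) =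
        (n + 2 * (((d : ℝ) - 1) / 2)) / (n + 2) * (2 * (d + 1) + 4 * n) by ring
    simp only [map_mul, map_add, map_natCast, map_ofNat C, map_one] at hcoeff
    rw [← polyLaplacianLM_apply, zonal, ← smul_eq_C_mul, ← smul_eq_C_mul, map_sub, map_smul,
      map_smul, polyLaplacianLM_apply, polyLaplacianLM_apply, polyLaplacian_linearForm_mul,
      polyLaplacian_normSqPoly_mul (isHomogeneous_zonal _ x n), polyLaplacian_zonal hx,
      polyLaplacian_zonal hx, dirDeriv_zonal_succ _ hx, smul_eq_C_mul, smul_eq_C_mul]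
    linear_combination zonal (((d : ℝ) - 1) / 2) x n * hcoeff

theorem zonal_mem_harmonicPoly {x : Fin (d + 1) → ℝ} (hx : x ⬝ᵥ x = 1) (k : ℕ) :
    zonal (((d : ℝ) - 1) / 2) x k ∈ harmonicPoly d k :=
  ⟨isHomogeneous_zonal _ x k, polyLaplacian_zonal hx k⟩

end HarmonicPolynomials

section SphericalMean

open MvPolynomial

variable {d : ℕ}

instance neZero_toSphere_volume (d : ℕ) : NeZero (volume : Measure (Euc d)).toSphere :=
  ⟨Measure.toSphere_ne_zero _⟩

instance isProbabilityMeasure_muSph (d : ℕ) : IsProbabilityMeasure (muSph d) :=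
  isProbabilityMeasureSMul

theorem dotProduct_self_of_mem_sphere (x : Sph d) : (x : Euc d).ofLp ⬝ᵥ (x : Euc d).ofLp = 1 := by
  have h := real_inner_self_eq_norm_sq (x : Euc d)
  rwa [norm_eq_of_mem_sphere, one_pow] at h

theorem integrable_of_continuous {X : Type*} [TopologicalSpace X] [CompactSpace X]
    [MeasurableSpace X] [OpensMeasurableSpace X] {f : X → ℝ} (hf : Continuous f) (μ : Measure X)
    [IsFiniteMeasure μ] : Integrable f μ :=
  hf.integrable_of_hasCompactSupport (HasCompactSupport.of_compactSpace f)

theorem integrable_eval_muSph (p : MvPolynomial (Fin (d + 1)) ℝ) :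
    Integrable (fun x : Sph d => eval (x : Euc d).ofLp p) (muSph d) :=
  integrable_of_continuous ((continuous_eval_ofLp p).comp continuous_subtype_val) _

/-- The mean of a polynomial over the sphere. -/
noncomputable def sphMean (d : ℕ) : MvPolynomial (Fin (d + 1)) ℝ →ₗ[ℝ] ℝ where
  toFun p := ∫ x : Sph d, eval (x : Euc d).ofLp p ∂muSph d
  map_add' p q := by
    simpa only [map_add] using integral_add (integrable_eval_muSph p) (integrable_eval_muSph q)
  map_smul' c p := by
    simpa only [smul_eval, smul_eq_mul, RingHom.id_apply] using
      integral_const_mul c fun x : Sph d => eval (x : Euc d).ofLp p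

theorem sphMean_normSqPoly_mul (p : MvPolynomial (Fin (d + 1)) ℝ) :
    sphMean d (normSqPoly _ ℝ * p) = sphMean d p := by
  refine integral_congr_ae (.of_forall fun x => ?_)
  simp only [map_mul, eval_normSqPoly, dotProduct_self_of_mem_sphere, one_mul]

theorem integral_eval_mul_exp_neg_norm_sq {m : ℕ} {p : MvPolynomial (Fin (d + 1)) ℝ}
    (hp : p.IsHomogeneous m) :
    ∫ x : Euc d, eval x.ofLp p * Real.exp (-‖x‖ ^ 2) =
      (volume : Measure (Euc d)).toSphere.real Set.univ *
        (Real.Gamma (((d : ℝ) + 1 + m) / 2) / 2) * sphMean d p := by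
  have hmean : sphMean d p = ((volume : Measure (Euc d)).toSphere.real Set.univ)⁻¹ *
      ∫ x : Sph d, eval (x : Euc d).ofLp p ∂(volume : Measure (Euc d)).toSphere := by
    change ∫ x : Sph d, eval (x : Euc d).ofLp p ∂muSph d = _
    rw [muSph, integral_smul_measure, smul_eq_mul, ENNReal.toReal_inv, measureReal_def]
  rw [integral_mul_exp_neg_norm_sq_of_homogeneous (m := m) volume fun r _ x => ?_, hmean]
  · rw [finrank_euclideanSpace_fin, Nat.cast_add_one]
    have harea := measureReal_univ_ne_zero (μ := (volume : Measure (Euc d)).toSphere)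
    field_simp
  · exact eval_smul_of_isHomogeneous hp r x.ofLp

theorem pderiv_eq_zero_of_isHomogeneous_zero {σ R : Type*} [CommSemiring R] {p : MvPolynomial σ R}
    (hp : p.IsHomogeneous 0) (i : σ) : pderiv i p = 0 := by
  rw [totalDegree_eq_zero_iff_eq_C.1 ((totalDegree_zero_iff_isHomogeneous σ).2 hp), pderiv_C]

theorem sphMean_X_mul_of_isHomogeneous_zero {p : MvPolynomial (Fin (d + 1)) ℝ}
    (hp : p.IsHomogeneous 0) (i : Fin (d + 1)) : sphMean d (X i * p) = 0 := by
  have byParts := two_mul_integral_X_mul_exp_neg_norm_sq p i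
  rw [pderiv_eq_zero_of_isHomogeneous_zero hp,
    integral_eval_mul_exp_neg_norm_sq ((isHomogeneous_X ℝ i).mul hp)] at byParts
  have hgamma := Real.Gamma_pos_of_pos (s := ((d : ℝ) + 1 + (1 + 0 : ℕ)) / 2) (by positivity)
  have harea := measureReal_univ_pos (μ := (volume : Measure (Euc d)).toSphere)
  have hmass := mul_pos harea (half_pos hgamma)
  simpa only [map_zero, zero_mul, integral_zero, mul_eq_zero, two_ne_zero, hmass.ne',
    false_or] using byParts

theorem sphMean_X_mul {m : ℕ} {p : MvPolynomial (Fin (d + 1)) ℝ} (hp : p.IsHomogeneous m)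
    (i : Fin (d + 1)) : (d + m) * sphMean d (X i * p) = sphMean d (pderiv i p) := by
  rcases m with _ | m
  · rw [sphMean_X_mul_of_isHomogeneous_zero hp, pderiv_eq_zero_of_isHomogeneous_zero hp, map_zero,
      mul_zero]
  have byParts := two_mul_integral_X_mul_exp_neg_norm_sq p i
  have hgamma := Real.Gamma_pos_of_pos (s := ((d : ℝ) + 1 + m) / 2) (by positivity)
  have hrec : Real.Gamma (((d : ℝ) + 1 + (1 + (m + 1) : ℕ)) / 2) =
      ((d : ℝ) + 1 + m) / 2 * Real.Gamma (((d : ℝ) + 1 + m) / 2) := by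
    rw [← Real.Gamma_add_one (by positivity)]
    push_cast
    ring_nf
  rw [integral_eval_mul_exp_neg_norm_sq ((isHomogeneous_X ℝ i).mul hp), hrec,
    integral_eval_mul_exp_neg_norm_sq hp.pderiv, Nat.add_sub_cancel] at byParts
  have harea := measureReal_univ_pos (μ := (volume : Measure (Euc d)).toSphere)
  have hmass := mul_pos harea (half_pos hgamma)
  refine mul_left_cancel₀ hmass.ne' ?_
  push_cast
  linear_combination byParts

theorem sphMean_linearForm_mul {m : ℕ} {p : MvPolynomial (Fin (d + 1)) ℝ} (hp : p.IsHomogeneous m)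
    (x : Fin (d + 1) → ℝ) : (d + m) * sphMean d (linearForm x * p) = sphMean d (dirDeriv x p) := by
  simp only [linearForm, dirDeriv_apply, sum_mul, ← smul_eq_C_mul, smul_mul_assoc, map_sum,
    map_smul, mul_sum, ← sphMean_X_mul hp, smul_eq_mul, mul_left_comm]

theorem sphMean_eq_zero_of_mem_harmonicPoly {k : ℕ} {f : MvPolynomial (Fin (d + 1)) ℝ}
    (hf : f ∈ harmonicPoly d (k + 1)) : sphMean d f = 0 := by
  have hhom : f.IsHomogeneous (k + 1) := hf.1
  have hlap : ∑ i, pderiv i (pderiv i f) = 0 := hf.2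
  have euler := congrArg (sphMean d) hhom.sum_X_mul_pderiv
  suffices hsum : ∑ i, sphMean d (X i * pderiv i f) = 0 by
    rw [map_sum, hsum, map_nsmul, nsmul_eq_mul] at euler
    exact (mul_eq_zero.1 euler.symm).resolve_left (Nat.cast_ne_zero.2 k.succ_ne_zero)
  rcases k with _ | k
  · exact sum_eq_zero fun i _ => sphMean_X_mul_of_isHomogeneous_zero hhom.pderiv i
  · have hpos : (0 : ℝ) < d + (k + 1 : ℕ) := by positivity
    refine (mul_eq_zero.1 ?_).resolve_left hpos.ne'
    rw [mul_sum, ← map_zero (sphMean d), ← hlap, map_sum]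
    exact sum_congr rfl fun i _ => sphMean_X_mul hhom.pderiv i

theorem sphMean_mul_eq_zero_of_lt {j k : ℕ} (hjk : j < k) {f q : MvPolynomial (Fin (d + 1)) ℝ}
    (hf : f ∈ harmonicPoly d k) (hq : q.IsHomogeneous j) : sphMean d (f * q) = 0 := by
  induction j using Nat.strong_induction_on generalizing k f q with
  | _ j ih =>
  rcases j with _ | j
  · obtain ⟨k, rfl⟩ := Nat.exists_eq_add_one.2 hjk
    rw [totalDegree_eq_zero_iff_eq_C.1 ((totalDegree_zero_iff_isHomogeneous _).2 hq), mul_comm,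
      ← smul_eq_C_mul, map_smul, sphMean_eq_zero_of_mem_harmonicPoly hf, smul_zero]
  have hterm (i : Fin (d + 1)) : sphMean d (X i * (f * pderiv i q)) = 0 := by
    have byParts := sphMean_X_mul (IsHomogeneous.mul hf.1 (hq.pderiv (i := i))) i
    rw [pderiv_mul, map_add, Nat.add_sub_cancel,
      ih j (by omega) (by omega) (pderiv_mem_harmonicPoly hf i) hq.pderiv,
      ih (j - 1) (by omega) (by omega) hf hq.pderiv.pderiv, add_zero] at byParts
    have hpos : (0 : ℝ) < d + (k + j : ℕ) := by
      have : 0 < k := by omega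
      positivity
    exact (mul_eq_zero.1 byParts).resolve_left hpos.ne'
  have euler := congrArg (fun p => sphMean d (f * p)) hq.sum_X_mul_pderiv
  simp only [mul_sum, mul_left_comm f, map_sum, hterm, sum_const_zero] at euler
  rw [mul_smul_comm, map_nsmul, nsmul_eq_mul] at euler
  exact (mul_eq_zero.1 euler.symm).resolve_left (Nat.cast_ne_zero.2 j.succ_ne_zero)

theorem sphMean_mul_zonal_succ (x : Fin (d + 1) → ℝ) {m : ℕ} {f : MvPolynomial (Fin (d + 1)) ℝ}
    (hf : f ∈ harmonicPoly d (m + 1)) :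
    (m + 1) * sphMean d (f * zonal ((d - 1) / 2) x (m + 1)) =
      (d + 2 * m - 1) * sphMean d (linearForm x * (f * zonal ((d - 1) / 2) x m)) := by
  rcases m with _ | m
  · rw [zero_add, zonal, zonal, mul_one, ← smul_eq_C_mul, mul_smul_comm, map_smul, smul_eq_mul,
      mul_comm f]
    push_cast
    ring
  · have hlower : sphMean d (normSqPoly _ ℝ * (f * zonal ((d - 1) / 2) x m)) = 0 := by
      rw [sphMean_normSqPoly_mul,
        sphMean_mul_eq_zero_of_lt (by omega) hf (isHomogeneous_zonal _ x m)]
    rw [zonal, mul_sub, mul_left_comm f, mul_left_comm f, mul_left_comm f, mul_left_comm f,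
      map_sub, ← smul_eq_C_mul, ← smul_eq_C_mul, map_smul, map_smul, hlower, smul_zero, sub_zero,
      smul_eq_mul]
    push_cast
    field_simp
    ring

theorem sphMean_mul_zonal (x : Fin (d + 1) → ℝ) {k : ℕ}
    {f : MvPolynomial (Fin (d + 1)) ℝ} (hf : f ∈ harmonicPoly d k) :
    (d + 2 * k - 1) * sphMean d (f * zonal ((d - 1) / 2) x k) = (d - 1) * eval x f := by
  induction k generalizing f with
  | zero =>
    rw [totalDegree_eq_zero_iff_eq_C.1 ((totalDegree_zero_iff_isHomogeneous _).2 hf.1)]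
    simp [zonal, sphMean]
  | succ m ih =>
    have hzonal := isHomogeneous_zonal ((d - 1) / 2) x m
    have byParts := sphMean_linearForm_mul (IsHomogeneous.mul hf.1 hzonal) x
    have hortho := sphMean_mul_eq_zero_of_lt (by omega) hf (isHomogeneous_dirDeriv x hzonal)
    rw [Derivation.leibniz, smul_eq_mul, smul_eq_mul, map_add, hortho, zero_add,
      mul_comm (zonal _ x m)] at byParts
    have hih := ih (dirDeriv_mem_harmonicPoly hf x)
    rw [eval_dirDeriv_self x hf.1] at hih
    have hsucc := sphMean_mul_zonal_succ x hf
    refine mul_left_cancel₀ m.cast_add_one_ne_zero ?_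
    push_cast at byParts hih ⊢
    linear_combination (d + 2 * m + 1 : ℝ) * hsucc + (d + 2 * m - 1 : ℝ) * byParts + hih

end SphericalMean

section SphericalHarmonics

open MvPolynomial

variable {d n j k : ℕ}

/-- Restriction of polynomials to the sphere, as a linear map. -/
noncomputable def sphRestrict (d : ℕ) : MvPolynomial (Fin (d + 1)) ℝ →ₗ[ℝ] SphFun d where
  toFun p x := eval (x : Euc d).ofLp p
  map_add' _ _ := funext fun _ => map_add _ _ _
  map_smul' _ _ := funext fun _ => smul_eval _ _ _

/-- The linear subspace underlying the set `sphHarmonic d k` of spherical harmonics of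
degree `k`. -/
noncomputable def sphHarmonicSubmodule (d k : ℕ) : Submodule ℝ (SphFun d) :=
  (harmonicPoly d k).map (sphRestrict d)

theorem sphRestrict_apply (p : MvPolynomial (Fin (d + 1)) ℝ) (x : Sph d) :
    sphRestrict d p x = eval (x : Euc d).ofLp p :=
  rfl

theorem mem_sphHarmonicSubmodule {f : SphFun d} :
    f ∈ sphHarmonicSubmodule d k ↔ f ∈ sphHarmonic d k := by
  simp only [sphHarmonicSubmodule, Submodule.mem_map, harmonicPoly, Submodule.mem_inf,
    mem_homogeneousSubmodule, LinearMap.mem_ker, polyLaplacianLM_apply, and_assoc, sphHarmonic,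
    Set.mem_ofPred_eq, funext_iff, sphRestrict_apply, eq_comm (b := f _)]

theorem continuous_of_mem_sphHarmonicSubmodule {f : SphFun d}
    (hf : f ∈ sphHarmonicSubmodule d k) : Continuous f := by
  obtain ⟨p, -, rfl⟩ := hf
  exact (continuous_eval_ofLp p).comp continuous_subtype_val

theorem integrable_mul_of_mem_sphHarmonicSubmodule {f g : SphFun d}
    (hf : f ∈ sphHarmonicSubmodule d j) (hg : g ∈ sphHarmonicSubmodule d k) :
    Integrable (f * g) (muSph d) :=
  integrable_of_continuous ((continuous_of_mem_sphHarmonicSubmodule hf).mul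
    (continuous_of_mem_sphHarmonicSubmodule hg)) _

theorem integral_sphRestrict_mul (p q : MvPolynomial (Fin (d + 1)) ℝ) :
    ∫ x, (sphRestrict d p * sphRestrict d q) x ∂muSph d = sphMean d (p * q) :=
  integral_congr_ae (.of_forall fun x => (map_mul (eval (x : Euc d).ofLp) p q).symm)

theorem integral_mul_eq_zero_of_ne {f g : SphFun d} (hjk : j ≠ k)
    (hf : f ∈ sphHarmonicSubmodule d j) (hg : g ∈ sphHarmonicSubmodule d k) :
    ∫ x, (f * g) x ∂muSph d = 0 := by
  obtain ⟨p, hp, rfl⟩ := hf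
  obtain ⟨q, hq, rfl⟩ := hg
  rw [integral_sphRestrict_mul]
  rcases hjk.lt_or_gt with hlt | hgt
  · rw [mul_comm, sphMean_mul_eq_zero_of_lt hlt hq hp.1]
  · exact sphMean_mul_eq_zero_of_lt hgt hp hq.1

theorem ae_eq_zero_of_sum_eq_zero {s : Finset ℕ} {c : ℕ → SphFun d}
    (hc : ∀ j, c j ∈ sphHarmonicSubmodule d j) (hsum : ∑ j ∈ s, c j = 0) (hk : k ∈ s) :
    c k =ᵐ[muSph d] 0 := by
  have hself : ∫ x, (c k * c k) x ∂muSph d = 0 := by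
    rw [← sum_eq_single_of_mem k hk fun j _ hjk =>
        integral_mul_eq_zero_of_ne hjk.symm (hc k) (hc j),
      ← integral_finsetSum _ fun j _ => integrable_mul_of_mem_sphHarmonicSubmodule (hc k) (hc j)]
    simp only [← Finset.sum_apply, ← mul_sum, hsum, mul_zero, Pi.zero_apply, integral_zero]
  have hzero := (integral_eq_zero_iff_of_nonneg (fun x => mul_self_nonneg (c k x))
    (integrable_mul_of_mem_sphHarmonicSubmodule (hc k) (hc k))).1 hself
  filter_upwards [hzero] with x hx using mul_self_eq_zero.1 hx

theorem harmComponent_sum_ae_eq {c : ℕ → SphFun d} (hc : ∀ j, c j ∈ sphHarmonicSubmodule d j)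
    (hk : k ∈ Icc 1 n) : harmComponent d n (∑ j ∈ Icc 1 n, c j) k =ᵐ[muSph d] c k := by
  have hex : ∃ c' : ℕ → SphFun d, (∀ j, c' j ∈ sphHarmonic d j) ∧
      ∑ j ∈ Icc 1 n, c j = ∑ j ∈ Icc 1 n, c' j :=
    ⟨c, fun j => mem_sphHarmonicSubmodule.1 (hc j), rfl⟩
  obtain ⟨hmem, hsum⟩ := hex.choose_spec
  rw [harmComponent, dif_pos hex]
  have hdiff := ae_eq_zero_of_sum_eq_zero
    (fun j => sub_mem (mem_sphHarmonicSubmodule.2 (hmem j)) (hc j))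
    (by rw [sum_sub_distrib, ← hsum, sub_self]) hk
  filter_upwards [hdiff] with x hx using sub_eq_zero.1 hx

theorem innerW_sum_self {c : ℕ → SphFun d} (hc : ∀ j, c j ∈ sphHarmonicSubmodule d j) :
    innerW d n (∑ j ∈ Icc 1 n, c j) (∑ j ∈ Icc 1 n, c j) =
      ∑ k ∈ Icc 1 n, (k * (k + d - 1)) * ∫ x, (c k * c k) x ∂muSph d := by
  refine sum_congr rfl fun k hk => congrArg _ (integral_congr_ae ?_)
  exact (harmComponent_sum_ae_eq hc hk).mul (harmComponent_sum_ae_eq hc hk)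

theorem innerW_self_nonneg (P : SphFun d) : 0 ≤ innerW d n P P := by
  refine sum_nonneg fun k hk => mul_nonneg ?_ (integral_nonneg fun x => mul_self_nonneg _)
  have hk : (1 : ℝ) ≤ k := Nat.one_le_cast.2 (mem_Icc.1 hk).1
  exact mul_nonneg (by linarith) (by linarith [d.cast_nonneg (α := ℝ)])

end SphericalHarmonics

section ReproducingKernel

variable {d n k : ℕ}

/-- The zonal function `y ↦ G_k^α((x, y))` on the sphere, with `α = (d - 1) / 2`. -/
noncomputable def zonalHarmonic (d k : ℕ) (x : Sph d) : SphFun d :=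
  fun y => (gegenbauer ((d - 1) / 2) k).eval ⟪(x : Euc d), (y : Euc d)⟫

theorem zonalHarmonic_eq_sphRestrict (x : Sph d) :
    zonalHarmonic d k x = sphRestrict d (zonal ((d - 1) / 2) (x : Euc d).ofLp k) := by
  ext y
  rw [sphRestrict_apply, eval_zonal _ _ (dotProduct_self_of_mem_sphere y), dotProduct_comm]
  rfl

theorem zonalHarmonic_mem (x : Sph d) : zonalHarmonic d k x ∈ sphHarmonicSubmodule d k :=
  ⟨_, zonal_mem_harmonicPoly (dotProduct_self_of_mem_sphere x) k,
    (zonalHarmonic_eq_sphRestrict x).symm⟩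

theorem integral_mul_zonalHarmonic {f : SphFun d} (hf : f ∈ sphHarmonicSubmodule d k)
    (x : Sph d) :
    (d + 2 * k - 1) * ∫ y, (f * zonalHarmonic d k x) y ∂muSph d = (d - 1) * f x := by
  obtain ⟨p, hp, rfl⟩ := hf
  rw [zonalHarmonic_eq_sphRestrict, integral_sphRestrict_mul, sphMean_mul_zonal _ hp]
  rfl

/-- The coefficient `dim H_k / (w_k G_k^α(1))` of `G_k^α` in `gw`. It vanishes for `d = 1`, where
`G_k^0 = 0` and the division is by zero. -/
noncomputable def gwCoeff (d k : ℕ) : ℝ :=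
  dimHarm d k / ((k * (k + d - 1)) * (gegenbauer ((d - 1) / 2) k).eval 1)

theorem eval_gw (t : ℝ) : (gw d n).eval t =
    ∑ k ∈ Icc 1 n, gwCoeff d k * (gegenbauer ((d - 1) / 2) k).eval t := by
  simp only [gw, gwCoeff, Polynomial.eval_finsetSum, Polynomial.eval_mul, Polynomial.eval_C]

theorem GxFun_eq_sum (x : Sph d) :
    GxFun d n x = ∑ k ∈ Icc 1 n, gwCoeff d k • zonalHarmonic d k x := by
  ext y
  rw [GxFun, eval_gw, Finset.sum_apply]
  rfl

theorem integral_GxFun (x : Sph d) : ∫ y, GxFun d n x y ∂muSph d = 0 := by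
  have hint (k : ℕ) : Integrable (gwCoeff d k • zonalHarmonic d k x) (muSph d) :=
    integrable_of_continuous
      (continuous_of_mem_sphHarmonicSubmodule (Submodule.smul_mem _ _ (zonalHarmonic_mem x))) _
  simp only [GxFun_eq_sum, Finset.sum_apply]
  rw [integral_finsetSum _ fun k _ => hint k]
  refine sum_eq_zero fun k hk => ?_
  obtain ⟨m, rfl⟩ := Nat.exists_eq_add_one.2 (mem_Icc.1 hk).1
  have hmean := sphMean_eq_zero_of_mem_harmonicPoly
    (zonal_mem_harmonicPoly (dotProduct_self_of_mem_sphere x) (m + 1))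
  rw [zonalHarmonic_eq_sphRestrict, ← map_smul]
  exact ((sphMean d).map_smul _ _).trans (by rw [hmean, smul_zero])

theorem eval_one_gegenbauer_succ (α : ℝ) : ∀ k : ℕ,
    (k + 1) * (gegenbauer α (k + 1)).eval 1 = (k + 2 * α) * (gegenbauer α k).eval 1
  | 0 => by simp [gegenbauer]
  | n + 1 => by
    have ih := eval_one_gegenbauer_succ α n
    rw [gegenbauer]
    simp only [Polynomial.eval_sub, Polynomial.eval_mul, Polynomial.eval_C, Polynomial.eval_X]
    push_cast
    field_simp
    linear_combination (n + 2 : ℝ) * ih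

theorem eval_one_gegenbauer_mul (d : ℕ) : ∀ k : ℕ,
    (k + d) * (gegenbauer ((d - 1) / 2) (k + 1)).eval 1 = (d - 1) * (d + k).choose (k + 1)
  | 0 => by
    simp only [CharP.cast_eq_zero, zero_add, gegenbauer, Polynomial.eval_mul, Polynomial.eval_C,
      Polynomial.eval_X, mul_one, add_zero, Nat.choose_one_right]
    ring
  | k + 1 => by
    have ih := eval_one_gegenbauer_mul d k
    have hsucc := eval_one_gegenbauer_succ ((d - 1) / 2) (k + 1)
    have hchoose : ((d : ℝ) + k + 1) * (d + k).choose (k + 1) =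
        (d + (k + 1)).choose (k + 1 + 1) * (k + 1 + 1) :=
      mod_cast Nat.add_one_mul_choose_eq (d + k) (k + 1)
    push_cast at ih hsucc ⊢
    refine mul_left_cancel₀ (by positivity : (k : ℝ) + 1 + 1 ≠ 0) ?_
    linear_combination (k + 1 + d : ℝ) * hsucc + (k + 1 + d : ℝ) * ih + (d - 1 : ℝ) * hchoose

theorem weight_mul_gwCoeff_sq (hd : 1 ≤ d) (k : ℕ) :
    (k * (k + d - 1)) * gwCoeff d k ^ 2 * (d - 1) = gwCoeff d k * (d + 2 * k - 1) := by
  rcases k with _ | k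
  · simp [gwCoeff]
  have hone := eval_one_gegenbauer_mul d k
  rw [gwCoeff, dimHarm, ← add_assoc, Nat.add_sub_cancel]
  rcases eq_or_ne ((gegenbauer ((d - 1) / 2) (k + 1)).eval 1) 0 with hzero | hne
  · simp [hzero]
  have hkd : (k : ℝ) + d ≠ 0 := by positivity
  have hw : ((k + 1 : ℕ) : ℝ) + d - 1 = k + d := by push_cast; ring
  rw [hw]
  push_cast
  field_simp
  linear_combination -(2 * (k + 1) + d - 1 : ℝ) ^ 2 * (d + k).choose (k + 1) * hone

theorem weight_mul_gwCoeff_sq_mul_integral (hd : 1 ≤ d) {f : SphFun d}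
    (hf : f ∈ sphHarmonicSubmodule d k) (x : Sph d) :
    (k * (k + d - 1)) * (gwCoeff d k ^ 2 * ∫ y, (f * zonalHarmonic d k x) y ∂muSph d) =
      gwCoeff d k * f x := by
  rcases k with _ | k
  · simp [gwCoeff]
  have hne : (d : ℝ) + 2 * (k + 1 : ℕ) - 1 ≠ 0 := by
    push_cast
    linarith [d.cast_nonneg (α := ℝ), k.cast_nonneg (α := ℝ)]
  refine mul_left_cancel₀ hne ?_
  linear_combination ((k + 1 : ℕ) * ((k + 1 : ℕ) + d - 1) * gwCoeff d (k + 1) ^ 2 : ℝ) *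
    integral_mul_zonalHarmonic hf x + f x * weight_mul_gwCoeff_sq hd (k + 1)

theorem weight_mul_integral_sum_mul_self (hd : 1 ≤ d) {ι : Type*} [Fintype ι] (a : ι → ℝ)
    (x : ι → Sph d) (k : ℕ) :
    (k * (k + d - 1)) * ∫ y, ((gwCoeff d k • ∑ i, a i • zonalHarmonic d k (x i)) *
        (gwCoeff d k • ∑ i, a i • zonalHarmonic d k (x i))) y ∂muSph d =
      ∑ i, ∑ j, a i * a j * (gwCoeff d k * zonalHarmonic d k (x i) (x j)) := by
  set f : SphFun d := ∑ i, a i • zonalHarmonic d k (x i) with hf_def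
  have hf : f ∈ sphHarmonicSubmodule d k :=
    Submodule.sum_smul_mem _ _ fun i _ => zonalHarmonic_mem (x i)
  have hexpand : ∫ y, ((gwCoeff d k • f) * (gwCoeff d k • f)) y ∂muSph d =
      ∑ j, a j * (gwCoeff d k ^ 2 * ∫ y, (f * zonalHarmonic d k (x j)) y ∂muSph d) := by
    simp only [← integral_const_mul]
    rw [← integral_finsetSum _ fun j _ => ((integrable_mul_of_mem_sphHarmonicSubmodule hf
      (zonalHarmonic_mem (x j))).const_mul _).const_mul _]
    refine integral_congr_ae (.of_forall fun y => ?_)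
    have hy : f y = ∑ j, a j * zonalHarmonic d k (x j) y := Finset.sum_apply y _ _
    calc gwCoeff d k * f y * (gwCoeff d k * f y)
      _ = gwCoeff d k ^ 2 * f y * ∑ j, a j * zonalHarmonic d k (x j) y := by rw [← hy]; ring
      _ = ∑ j, a j * (gwCoeff d k ^ 2 * (f y * zonalHarmonic d k (x j) y)) := by
        rw [mul_sum]
        exact sum_congr rfl fun j _ => by ring
  rw [hexpand, mul_sum, sum_comm]
  refine sum_congr rfl fun j _ => ?_
  rw [mul_left_comm, weight_mul_gwCoeff_sq_mul_integral hd hf, hf_def, Finset.sum_apply, mul_sum,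
    mul_sum]
  exact sum_congr rfl fun i _ => by rw [Pi.smul_apply, smul_eq_mul]; ring

theorem normW_sum_smul_GxFun_sq (hd : 1 ≤ d) {ι : Type*} [Fintype ι] (a : ι → ℝ)
    (x : ι → Sph d) :
    normW d n (∑ i, a i • GxFun d n (x i)) ^ 2 =
      ∑ i, ∑ j, a i * a j * GxFun d n (x i) (x j) := by
  have hsum : ∑ i, a i • GxFun d n (x i) =
      ∑ k ∈ Icc 1 n, gwCoeff d k • ∑ i, a i • zonalHarmonic d k (x i) := by
    simp only [GxFun_eq_sum, smul_sum]
    rw [sum_comm]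
    simp only [smul_comm (a _)]
  have hmem (k : ℕ) :
      gwCoeff d k • ∑ i, a i • zonalHarmonic d k (x i) ∈ sphHarmonicSubmodule d k :=
    Submodule.smul_mem _ _ (Submodule.sum_smul_mem _ _ fun i _ => zonalHarmonic_mem (x i))
  rw [normW, Real.sq_sqrt (innerW_self_nonneg _), hsum, innerW_sum_self hmem]
  simp only [weight_mul_integral_sum_mul_self hd, GxFun_eq_sum, Finset.sum_apply, Pi.smul_apply,
    smul_eq_mul, mul_sum]
  rw [sum_comm]
  exact sum_congr rfl fun i _ => sum_comm

end ReproducingKernel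

section StratifiedSampling

open Function
open scoped ProbabilityTheory

variable {X ι : Type*} [MeasurableSpace X] [Fintype ι]

theorem pi_cond (μ : ι → Measure X) [∀ i, IsFiniteMeasure (μ i)] {s : ι → Set X}
    (hs : ∀ i, μ i (s i) ≠ 0) :
    Measure.pi (fun i => (μ i)[|s i]) = (Measure.pi μ)[|Set.univ.pi s] := by
  have (i : ι) : IsProbabilityMeasure (μ i)[|s i] :=
    ProbabilityTheory.cond_isProbabilityMeasure (hs i)
  refine Measure.pi_eq fun t _ => ?_
  rw [ProbabilityTheory.cond, Measure.restrict_pi_pi, Measure.smul_apply, Measure.pi_pi,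
    Measure.pi_pi, smul_eq_mul,
    ENNReal.prod_inv_distrib fun i _ j _ _ => .inl (hs i), ← prod_mul_distrib]
  rfl

theorem sum_restrict_eq_self (μ : Measure X) [IsFiniteMeasure μ] {s : ι → Set X}
    (hcover : ⋃ i, s i = Set.univ) (hsum : ∑ i, μ (s i) = μ Set.univ) :
    ∑ i, μ.restrict (s i) = μ := by
  refine (Measure.eq_of_le_of_measure_univ_eq ?_ ?_).symm
  · rw [← Measure.sum_fintype]
    simpa only [hcover, Measure.restrict_univ] using Measure.restrict_iUnion_le (μ := μ) (s := s)
  · rw [Measure.coe_finsetSum, Finset.sum_apply]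
    simp only [Measure.restrict_apply_univ, hsum]

section Kernel

variable {K : X → X → ℝ} {C : ℝ}

theorem integrable_of_measurable_of_bounded {Y : Type*} [MeasurableSpace Y] {f : Y → ℝ}
    (hf : Measurable f) (hC : ∀ y, |f y| ≤ C) (μ : Measure Y) [IsFiniteMeasure μ] :
    Integrable f μ :=
  .of_bound hf.aestronglyMeasurable C (.of_forall hC)

variable (ν : ι → Measure X) [∀ i, IsProbabilityMeasure (ν i)]

theorem map_eval_prodMk_pi {i j : ι} (hij : i ≠ j) :
    (Measure.pi ν).map (fun x => (x i, x j)) = (ν i).prod (ν j) := by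
  have hindep : ProbabilityTheory.IndepFun (fun x => x i) (fun x => x j) (Measure.pi ν) :=
    (ProbabilityTheory.iIndepFun_pi (X := fun _ => id) fun _ => aemeasurable_id).indepFun hij
  rw [ProbabilityTheory.indepFun_iff_map_prod_eq_prod_map_map (measurable_pi_apply i).aemeasurable
    (measurable_pi_apply j).aemeasurable] at hindep
  exact hindep.trans (congrArg₂ _ (measurePreserving_eval ν i).map_eq
    (measurePreserving_eval ν j).map_eq)

theorem integrable_integral_kernel (hK : Measurable (uncurry K)) (hC : ∀ x y, |K x y| ≤ C)
    (μ μ' : Measure X) [IsFiniteMeasure μ] [IsFiniteMeasure μ'] :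
    Integrable (fun x => ∫ y, K x y ∂μ') μ :=
  (integrable_of_measurable_of_bounded hK (fun p => hC p.1 p.2) (μ.prod μ')).integral_prod_left

theorem integral_pi_kernel_of_ne (hK : Measurable (uncurry K)) (hC : ∀ x y, |K x y| ≤ C)
    {i j : ι} (hij : i ≠ j) :
    ∫ x, K (x i) (x j) ∂Measure.pi ν = ∫ x, ∫ y, K x y ∂ν j ∂ν i := by
  have hmeas : Measurable fun x : ι → X => (x i, x j) := by fun_prop
  have hmap := integral_map (μ := Measure.pi ν) hmeas.aemeasurable hK.aestronglyMeasurable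
  rw [map_eval_prodMk_pi ν hij] at hmap
  exact hmap.symm.trans
    (integral_prod _ (integrable_of_measurable_of_bounded hK (fun p => hC p.1 p.2) _))

theorem integral_pi_kernel_self (hK : Measurable (uncurry K)) (hC : ∀ x y, |K x y| ≤ C)
    (i : ι) :
    ∫ x, K (x i) (x i) ∂Measure.pi ν =
      ∫ x, ∫ y, K x y ∂ν i ∂ν i + ∫ x, ∫ y, (K x x - K x y) ∂ν i ∂ν i := by
  have hdiag : Measurable fun x => K x x :=
    hK.comp (g := uncurry K) (measurable_id.prodMk measurable_id)
  have hdiff (x : X) : ∫ y, (K x x - K x y) ∂ν i = K x x - ∫ y, K x y ∂ν i := by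
    rw [integral_sub (integrable_const _)
      (integrable_of_measurable_of_bounded hK.of_uncurry_left (hC x) _), integral_const,
      probReal_univ, one_smul]
  simp only [hdiff]
  rw [integral_sub (integrable_of_measurable_of_bounded hdiag (fun x => hC x x) _)
    (integrable_integral_kernel hK hC _ _), add_sub_cancel,
    ← (measurePreserving_eval ν i).map_eq,
    integral_map (measurable_pi_apply i).aemeasurable hdiag.aestronglyMeasurable]

theorem integral_pi_sum_kernel (hK : Measurable (uncurry K)) (hC : ∀ x y, |K x y| ≤ C)
    (hzero : ∀ x, ∑ j, ∫ y, K x y ∂ν j = 0) :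
    ∫ x, ∑ i, ∑ j, K (x i) (x j) ∂Measure.pi ν = ∑ i, ∫ x, ∫ y, (K x x - K x y) ∂ν i ∂ν i := by
  classical
  have hmeas (i j : ι) : Measurable fun x : ι → X => K (x i) (x j) :=
    hK.comp (g := uncurry K) (f := fun x : ι → X => (x i, x j)) (by fun_prop)
  have hint (i j : ι) : Integrable (fun x : ι → X => K (x i) (x j)) (Measure.pi ν) :=
    integrable_of_measurable_of_bounded (hmeas i j) (fun x => hC _ _) _
  have hpair (i j : ι) : ∫ x, K (x i) (x j) ∂Measure.pi ν = ∫ x, ∫ y, K x y ∂ν j ∂ν i +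
      if i = j then ∫ x, ∫ y, (K x x - K x y) ∂ν i ∂ν i else 0 := by
    split_ifs with hij
    · rw [← hij, integral_pi_kernel_self ν hK hC]
    · rw [integral_pi_kernel_of_ne ν hK hC hij, add_zero]
  have hrow (i : ι) : ∑ j, ∫ x, ∫ y, K x y ∂ν j ∂ν i = 0 := by
    rw [← integral_finsetSum _ fun j _ => integrable_integral_kernel hK hC _ _]
    simp only [hzero, integral_zero]
  rw [integral_finsetSum _ fun i _ => integrable_finsetSum _ fun j _ => hint i j]
  refine sum_congr rfl fun i _ => ?_
  rw [integral_finsetSum _ fun j _ => hint i j]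
  simp only [hpair, sum_add_distrib, hrow, zero_add, sum_ite_eq, mem_univ, if_true]

theorem integral_pi_cond_sum_kernel (hK : Measurable (uncurry K)) (hC : ∀ x y, |K x y| ≤ C)
    (μ : Measure X) [IsProbabilityMeasure μ] {s : ι → Set X}
    (hcover : ⋃ i, s i = Set.univ) (harea : ∀ i, μ (s i) = (Fintype.card ι : ENNReal)⁻¹)
    (hzero : ∀ x, ∫ y, K x y ∂μ = 0) :
    ∫ x, ∑ i, ∑ j, K (x i) (x j) ∂Measure.pi (fun i => μ[|s i]) =
      (Fintype.card ι : ℝ) ^ 2 * ∑ i, ∫ x in s i, ∫ y in s i, (K x x - K x y) ∂μ ∂μ := by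
  have hcond (i : ι) : μ[|s i] = (Fintype.card ι : ENNReal) • μ.restrict (s i) := by
    rw [ProbabilityTheory.cond, harea, inv_inv]
  have (i : ι) : IsProbabilityMeasure μ[|s i] :=
    ProbabilityTheory.cond_isProbabilityMeasure (by simp [harea])
  have hdegenerate (x : X) : ∑ i, ∫ y, K x y ∂μ[|s i] = 0 := by
    have : Nonempty ι := (Set.mem_iUnion.1 (hcover.symm ▸ Set.mem_univ x)).nonempty
    have hcard : (Fintype.card ι : ENNReal) ≠ 0 := Nat.cast_ne_zero.2 Fintype.card_ne_zero
    have hsum : ∑ i, μ (s i) = μ Set.univ := by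
      simp only [harea, sum_const, card_univ, nsmul_eq_mul, measure_univ]
      exact ENNReal.mul_inv_cancel hcard (ENNReal.natCast_ne_top _)
    simp only [hcond, integral_smul_measure, ← smul_sum]
    rw [← integral_finsetSum_measure fun i _ =>
      integrable_of_measurable_of_bounded hK.of_uncurry_left (hC x) _,
      sum_restrict_eq_self μ hcover hsum, hzero, smul_zero]
  rw [integral_pi_sum_kernel _ hK hC hdegenerate, mul_sum]
  refine sum_congr rfl fun i _ => ?_
  simp only [hcond, integral_smul_measure, ENNReal.toReal_natCast, smul_eq_mul, integral_const_mul]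
  ring

end Kernel

end StratifiedSampling

theorem continuous_uncurry_GxFun (d n : ℕ) :
    Continuous (Function.uncurry fun x : Sph d => GxFun d n x) :=
  (gw d n).continuous.comp (by fun_prop)

theorem GxFun_self (d n : ℕ) (x : Sph d) : GxFun d n x x = (gw d n).eval 1 := by
  rw [GxFun, real_inner_self_eq_norm_sq, norm_eq_of_mem_sphere, one_pow]

open scoped ProbabilityTheory in
theorem integral_pi_cond_normW_sq {d : ℕ} (hd : 1 ≤ d) (n : ℕ) {N : ℕ} {R : Fin N → Set (Sph d)}
    (hcover : ⋃ i, R i = Set.univ) (harea : ∀ i, muSph d (R i) = 1 / N) :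
    ∫ x, normW d n ((N : ℝ)⁻¹ • ∑ i, GxFun d n (x i : Euc d)) ^ 2
        ∂Measure.pi (fun i => (muSph d)[|R i]) =
      ∑ i, ∫ x in R i, ∫ y in R i,
        ((gw d n).eval 1 - (gw d n).eval ⟪(x : Euc d), (y : Euc d)⟫) ∂muSph d ∂muSph d := by
  obtain ⟨C, hC⟩ := isCompact_univ.exists_bound_of_continuousOn
    (continuous_uncurry_GxFun d n).continuousOn
  have hkernel := integral_pi_cond_sum_kernel (continuous_uncurry_GxFun d n).measurable
    (fun x y => hC (x, y) trivial) (muSph d) hcover (by simpa using harea) integral_GxFun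
  simp only [smul_sum, normW_sum_smul_GxFun_sq hd, ← mul_sum]
  rw [integral_const_mul, hkernel, Fintype.card_fin]
  simp only [GxFun_self]
  rcases N.eq_zero_or_pos with rfl | hN
  · simp
  · field_simp
    rfl

theorem statement18_general {d : ℕ} (hd : 1 ≤ d) (n : ℕ) {N : ℕ} {R : Fin N → Set (Sph d)}
    (hcover : ⋃ i, R i = Set.univ) (harea : ∀ i, muSph d (R i) = 1 / N) :
    (∏ i, ((muSph d) (R i)).toReal)⁻¹ *
        ∫ x in Set.univ.pi R,
          (normW d n ((N : ℝ)⁻¹ • ∑ i, GxFun d n (x i : Euc d))) ^ 2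
          ∂(Measure.pi fun _ : Fin N => muSph d) =
      ∑ i, ∫ x in R i, ∫ y in R i,
        ((gw d n).eval 1 - (gw d n).eval ⟪(x : Euc d), (y : Euc d)⟫) ∂muSph d ∂muSph d := by
  have hpos (i : Fin N) : muSph d (R i) ≠ 0 := by simp [harea]
  rw [← integral_pi_cond_normW_sq hd n hcover harea, pi_cond _ hpos, ProbabilityTheory.cond,
    integral_smul_measure, Measure.pi_pi, ENNReal.toReal_inv, ENNReal.toReal_prod, smul_eq_mul]

/-- For an area-regular partition `R_1,…,R_N` of `S^d`, the average of
`‖(1/N) Σ_i G_{x_i}‖_w²` over points `x_i` independent and uniform in the `R_i` equals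
`Σ_i ∫_{R_i×R_i} (g_w(1) − g_w((x,y))) dμ_d(x) dμ_d(y)`. -/
theorem statement18 (d n N : ℕ) (hd : 1 ≤ d) (hn : 1 ≤ n) (hN : 1 ≤ N)
    (R : Fin N → Set (Sph d)) (hR : IsAreaRegularPartition d N R) :
    (∏ i, ((muSph d) (R i)).toReal)⁻¹ *
        ∫ x in Set.univ.pi R,
          (normW d n ((N : ℝ)⁻¹ • ∑ i, GxFun d n (x i : Euc d))) ^ 2
          ∂(Measure.pi fun _ : Fin N => muSph d) =
      ∑ i, ∫ x in R i, ∫ y in R i,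
        ((gw d n).eval 1 - (gw d n).eval ⟪(x : Euc d), (y : Euc d)⟫) ∂muSph d ∂muSph d :=
  statement18_general hd n hR.2.1 hR.2.2.2
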